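/- Let p be a probability distribution on ℝ^d with supp(p) ⊂ B_R(0), mean μ, and covariance Σ. For t ∈ (−1,1) define W_t(y;x) = exp(−‖x − ty‖²/(2(1−t)²)), D_t(x) = E_{X~p}[W_t(X;x)], N_t(x) = E_{X~p}[X W_t(X;x)], and m_t(x) = N_t(x)/D_t(x); define m_t^G analogously with p replaced by the Gaussian N(μ, Σ), so that m_t^G(x) = μ + tΣ(t²Σ + (1−t)²I)^{-1}(x − tμ). Then for every δ ∈ (0,1) there exists a bounded function H̃ : B̄_R(0) × [−δ, δ] → ℝ^d such that m_t(x) = m_t^G(x) + t² H̃(x, t) for all x ∈ B̄_R(0) and all |t| ≤ δ. -/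

import Mathlib

open MeasureTheory ProbabilityTheory

noncomputable section

/-- The mean `μ = E_{X ~ p}[X]` of a measure `p` on `ℝ^d`. -/
def meanVec {d : ℕ} (p : Measure (EuclideanSpace ℝ (Fin d))) : EuclideanSpace ℝ (Fin d) :=
  ∫ y, y ∂p

/-- The covariance matrix `Σ = E[(X − μ)(X − μ)^T]` of a measure `p` on `ℝ^d`. -/
def covMatrix {d : ℕ} (p : Measure (EuclideanSpace ℝ (Fin d))) :
    Matrix (Fin d) (Fin d) ℝ :=
  Matrix.of fun i j => ∫ y, (y i - meanVec p i) * (y j - meanVec p j) ∂p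

/-- `W_t(y; x) = exp(−‖x − ty‖²/(2(1−t)²))`. -/
def Wt {d : ℕ} (t : ℝ) (y x : EuclideanSpace ℝ (Fin d)) : ℝ :=
  Real.exp (-‖x - t • y‖ ^ 2 / (2 * (1 - t) ^ 2))

/-- `D_t(x) = E_{X ~ p}[W_t(X; x)]`. -/
def Dt {d : ℕ} (p : Measure (EuclideanSpace ℝ (Fin d))) (t : ℝ)
    (x : EuclideanSpace ℝ (Fin d)) : ℝ :=
  ∫ y, Wt t y x ∂p

/-- `N_t(x) = E_{X ~ p}[X · W_t(X; x)]`. -/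
def Nt {d : ℕ} (p : Measure (EuclideanSpace ℝ (Fin d))) (t : ℝ)
    (x : EuclideanSpace ℝ (Fin d)) : EuclideanSpace ℝ (Fin d) :=
  ∫ y, Wt t y x • y ∂p

/-- The denoiser `m_t(x) = N_t(x)/D_t(x)`. -/
def mtDen {d : ℕ} (p : Measure (EuclideanSpace ℝ (Fin d))) (t : ℝ)
    (x : EuclideanSpace ℝ (Fin d)) : EuclideanSpace ℝ (Fin d) :=
  (Dt p t x)⁻¹ • Nt p t x

/-- `m_t^G(x) = μ + tΣ(t²Σ + (1−t)²I)⁻¹(x − tμ)`, the denoiser of the Gaussian `N(μ, Σ)`. -/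
def mtG {d : ℕ} (μv : EuclideanSpace ℝ (Fin d)) (S : Matrix (Fin d) (Fin d) ℝ) (t : ℝ)
    (x : EuclideanSpace ℝ (Fin d)) : EuclideanSpace ℝ (Fin d) :=
  μv + t • Matrix.toEuclideanLin
      (S * (t ^ 2 • S + (1 - t) ^ 2 • (1 : Matrix (Fin d) (Fin d) ℝ))⁻¹) (x - t • μv)

theorem abs_exp_sub_one_sub_self_le (u : ℝ) :
    |Real.exp u - 1 - u| ≤ u ^ 2 * Real.exp |u| := by
  have h := Complex.norm_exp_sub_sum_le_norm_mul_exp (u : ℂ) 2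
  have e : Complex.exp (u : ℂ) - ∑ m ∈ Finset.range 2, (u : ℂ) ^ m / (m.factorial : ℂ)
      = ((Real.exp u - 1 - u : ℝ) : ℂ) := by
    simp [Finset.sum_range_succ]
    ring
  rw [e, Complex.norm_real, Complex.norm_real] at h
  simpa using h

/-- The exponent of `W_t(y; x)` up to the additive term `-‖x‖² / (2(1-t)²) + t⟪x, m⟫`, which does
not depend on `y`. -/
def tiltExponent {d : ℕ} (t : ℝ) (m x y : EuclideanSpace ℝ (Fin d)) : ℝ :=
  (t * inner ℝ x y - t ^ 2 * ‖y‖ ^ 2 / 2) / (1 - t) ^ 2 - t * inner ℝ x m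

theorem Wt_eq_mul_exp_tiltExponent {d : ℕ} {t : ℝ} (ht : t < 1)
    (m x y : EuclideanSpace ℝ (Fin d)) :
    Wt t y x = Real.exp (-‖x‖ ^ 2 / (2 * (1 - t) ^ 2) + t * inner ℝ x m) *
      Real.exp (tiltExponent t m x y) := by
  have hs : (1 - t) ≠ 0 := by linarith
  rw [Wt, tiltExponent, ← Real.exp_add, norm_sub_sq_real, norm_smul, mul_pow, inner_smul_right,
    Real.norm_eq_abs, sq_abs]
  congr 1
  field_simp
  ring

theorem continuous_tiltExponent {d : ℕ} (t : ℝ) (m x : EuclideanSpace ℝ (Fin d)) :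
    Continuous (tiltExponent t m x) := by
  unfold tiltExponent
  fun_prop

theorem abs_tiltExponent_sub_le {d : ℕ} {R δ t : ℝ} (hδ : δ < 1) (ht : |t| ≤ δ)
    {m x y : EuclideanSpace ℝ (Fin d)} (hx : ‖x‖ ≤ R) (hy : ‖y‖ ≤ R) :
    |tiltExponent t m x y - t * inner ℝ x (y - m)| ≤ 4 * R ^ 2 / (1 - δ) ^ 2 * t ^ 2 := by
  obtain ⟨ht1, ht2⟩ := abs_le.1 ht
  have hs : 0 < 1 - t := by linarith
  have hinner : |inner ℝ x y| ≤ R ^ 2 := (abs_real_inner_le_norm x y).trans (by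
    rw [sq]; exact mul_le_mul hx hy (norm_nonneg _) ((norm_nonneg _).trans hx))
  have hyy : ‖y‖ ^ 2 ≤ R ^ 2 := pow_le_pow_left₀ (norm_nonneg _) hy 2
  have e : tiltExponent t m x y - t * inner ℝ x (y - m)
      = t ^ 2 * ((2 - t) * inner ℝ x y - ‖y‖ ^ 2 / 2) / (1 - t) ^ 2 := by
    rw [tiltExponent, inner_sub_right]
    field_simp
    ring
  have hnum : |(2 - t) * inner ℝ x y - ‖y‖ ^ 2 / 2| ≤ 4 * R ^ 2 := by
    have h1 : |(2 - t) * inner ℝ x y| ≤ 3 * R ^ 2 := by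
      rw [abs_mul, abs_of_pos (by linarith : 0 < 2 - t)]
      exact mul_le_mul (by linarith) hinner (abs_nonneg _) (by norm_num)
    have := abs_le.1 h1
    rw [abs_le]
    constructor <;> nlinarith [sq_nonneg ‖y‖]
  have hden : (1 - δ) ^ 2 ≤ (1 - t) ^ 2 := pow_le_pow_left₀ (by linarith) (by linarith) 2
  rw [e, abs_div, abs_mul, abs_of_nonneg (sq_nonneg t), abs_of_pos (by positivity : 0 < (1 - t) ^ 2)]
  calc t ^ 2 * |(2 - t) * inner ℝ x y - ‖y‖ ^ 2 / 2| / (1 - t) ^ 2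
      ≤ t ^ 2 * (4 * R ^ 2) / (1 - δ) ^ 2 := by
        have : 0 < (1 - δ) ^ 2 := pow_pos (by linarith) 2
        gcongr
    _ = _ := by ring

/-- On bounded sets the tilted weight is bounded below and agrees with its linearization up to
`O(t²)`. -/
theorem exists_exp_tiltExponent_bounds {d : ℕ} {R δ : ℝ} (hR : 0 ≤ R) (hδ : δ < 1) :
    ∃ K : ℝ, ∃ c > 0, ∀ t : ℝ, |t| ≤ δ → ∀ m x y : EuclideanSpace ℝ (Fin d),
      ‖m‖ ≤ R → ‖x‖ ≤ R → ‖y‖ ≤ R →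
      c ≤ Real.exp (tiltExponent t m x y) ∧
      |Real.exp (tiltExponent t m x y) - 1 - t * inner ℝ x (y - m)| ≤ K * t ^ 2 := by
  set L := 4 * R ^ 2 / (1 - δ) ^ 2 with hL
  have hL0 : 0 ≤ L := by positivity
  set A := L + 2 * R ^ 2 with hA
  have hA0 : 0 ≤ A := by positivity
  refine ⟨L + A ^ 2 * Real.exp A, Real.exp (-A), Real.exp_pos _, fun t ht m x y hm hx hy => ?_⟩
  have h1 := abs_tiltExponent_sub_le (m := m) hδ ht hx hy
  rw [← hL] at h1
  have ht1 : |t| ≤ 1 := by linarith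
  have hinner : |inner ℝ x (y - m)| ≤ 2 * R ^ 2 :=
    (abs_real_inner_le_norm x (y - m)).trans (by
      have : ‖y - m‖ ≤ 2 * R := (norm_sub_le _ _).trans (by linarith)
      calc ‖x‖ * ‖y - m‖ ≤ R * (2 * R) := by gcongr
        _ = _ := by ring)
  set u := tiltExponent t m x y
  have hsq : t ^ 2 ≤ |t| := by
    rw [← sq_abs]; nlinarith [abs_nonneg t]
  have hu : |u| ≤ A * |t| := by
    calc |u| = |(u - t * inner ℝ x (y - m)) + t * inner ℝ x (y - m)| := by ring_nf
      _ ≤ |u - t * inner ℝ x (y - m)| + |t| * |inner ℝ x (y - m)| := by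
          rw [← abs_mul]; exact abs_add_le _ _
      _ ≤ L * |t| + |t| * (2 * R ^ 2) := by
          gcongr
          exact h1.trans (by gcongr)
      _ = A * |t| := by rw [hA]; ring
  have huA : |u| ≤ A := hu.trans (mul_le_of_le_one_right hA0 ht1)
  refine ⟨Real.exp_le_exp.2 (abs_le.1 huA).1, ?_⟩
  have h2 : |Real.exp u - 1 - u| ≤ A ^ 2 * Real.exp A * t ^ 2 := by
    calc _ ≤ u ^ 2 * Real.exp |u| := abs_exp_sub_one_sub_self_le u
      _ = |u| ^ 2 * Real.exp |u| := by rw [sq_abs]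
      _ ≤ (A * |t|) ^ 2 * Real.exp A := by gcongr
      _ = _ := by rw [mul_pow, sq_abs]; ring
  calc _ = |(Real.exp u - 1 - u) + (u - t * inner ℝ x (y - m))| := by ring_nf
    _ ≤ _ := abs_add_le _ _
    _ ≤ A ^ 2 * Real.exp A * t ^ 2 + L * t ^ 2 := add_le_add h2 h1
    _ = _ := by ring

theorem integrable_of_continuous_of_ae_norm_le {E F : Type*} [NormedAddCommGroup E]
    [MeasurableSpace E] [BorelSpace E] [ProperSpace E] [NormedAddCommGroup F]
    {p : Measure E} [IsFiniteMeasure p] {R : ℝ} (hp : ∀ᵐ y ∂p, ‖y‖ ≤ R)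
    {f : E → F} (hf : Continuous f) : Integrable f p := by
  obtain ⟨C, hC⟩ := (isCompact_closedBall (0 : E) R).exists_bound_of_continuousOn hf.continuousOn
  refine Integrable.of_bound hf.aestronglyMeasurable C ?_
  filter_upwards [hp] with y hy using hC y (by simpa using hy)

section Moments

variable {d : ℕ} {p : Measure (EuclideanSpace ℝ (Fin d))} [IsProbabilityMeasure p] {R : ℝ}

theorem norm_meanVec_le (hp : ∀ᵐ y ∂p, ‖y‖ ≤ R) : ‖meanVec p‖ ≤ R := by
  simpa [meanVec] using norm_integral_le_of_norm_le_const hp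

theorem integral_sub_meanVec (hp : ∀ᵐ y ∂p, ‖y‖ ≤ R) : ∫ y, (y - meanVec p) ∂p = 0 := by
  rw [integral_sub (integrable_of_continuous_of_ae_norm_le hp (by fun_prop)) (integrable_const _)]
  simp [meanVec]

theorem toEuclideanLin_covMatrix (hp : ∀ᵐ y ∂p, ‖y‖ ≤ R) (x : EuclideanSpace ℝ (Fin d)) :
    Matrix.toEuclideanLin (covMatrix p) x
      = ∫ y, inner ℝ x (y - meanVec p) • (y - meanVec p) ∂p := by
  ext i
  have hint : Integrable (fun y => inner ℝ x (y - meanVec p) • (y - meanVec p)) p :=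
    integrable_of_continuous_of_ae_norm_le hp (by fun_prop)
  have h := (EuclideanSpace.proj (𝕜 := ℝ) i : EuclideanSpace ℝ (Fin d) →L[ℝ] ℝ).integral_comp_comm
    hint
  simp only [PiLp.proj_apply] at h
  rw [← h, Matrix.toLpLin_apply]
  simp only [Matrix.mulVec, dotProduct, covMatrix, Matrix.of_apply, ← integral_mul_const]
  rw [← integral_finsetSum _ fun j _ => integrable_of_continuous_of_ae_norm_le hp (by fun_prop)]
  congr 1 with y
  simp only [PiLp.smul_apply, PiLp.sub_apply, smul_eq_mul, PiLp.inner_apply, Finset.sum_mul,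
    RCLike.inner_apply, conj_trivial]
  exact Finset.sum_congr rfl fun j _ => by ring

theorem posSemidef_covMatrix (hp : ∀ᵐ y ∂p, ‖y‖ ≤ R) : (covMatrix p).PosSemidef := by
  rw [← Matrix.isPositive_toEuclideanLin_iff]
  refine ⟨Matrix.isSymmetric_toEuclideanLin_iff.2 ?_, fun x => ?_⟩
  · ext i j
    simp [covMatrix, mul_comm]
  · rw [RCLike.re_to_real, real_inner_comm, toEuclideanLin_covMatrix hp, ← integral_inner
      (integrable_of_continuous_of_ae_norm_le hp (by fun_prop))]
    refine integral_nonneg fun y => ?_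
    simp only [Pi.zero_apply, inner_smul_right]
    exact mul_self_nonneg _

/-- The denoiser minus its first-order expansion, written through the linearization error of the
tilted weight. -/
theorem mtDen_sub_eq (hp : ∀ᵐ y ∂p, ‖y‖ ≤ R) {t : ℝ} (ht : t < 1)
    (x : EuclideanSpace ℝ (Fin d)) (r : EuclideanSpace ℝ (Fin d) → ℝ)
    (hr : ∀ y, r y = Real.exp (tiltExponent t (meanVec p) x y) - 1
      - t * inner ℝ x (y - meanVec p)) :
    mtDen p t x - (meanVec p + t • Matrix.toEuclideanLin (covMatrix p) x)
      = (∫ y, Real.exp (tiltExponent t (meanVec p) x y) ∂p)⁻¹ •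
        (∫ y, r y • (y - meanVec p) ∂p
          - (t * ∫ y, r y ∂p) • Matrix.toEuclideanLin (covMatrix p) x) := by
  set m := meanVec p with hm
  set T := Matrix.toEuclideanLin (covMatrix p) x with hT
  have hwc : Continuous fun y => Real.exp (tiltExponent t m x y) :=
    Real.continuous_exp.comp (continuous_tiltExponent t m x)
  have hrc : Continuous r := by
    rw [funext hr]
    fun_prop
  have hI {F : Type} [NormedAddCommGroup F] {f : EuclideanSpace ℝ (Fin d) → F}
      (hf : Continuous f) : Integrable f p := integrable_of_continuous_of_ae_norm_le hp hf
  have hw : ∀ y, Real.exp (tiltExponent t m x y) = 1 + t * inner ℝ x (y - m) + r y := fun y => by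
    rw [hr]; ring
  have hlin : ∫ y, inner ℝ x (y - m) ∂p = 0 := by
    rw [integral_inner (hI (by fun_prop)), integral_sub_meanVec hp, inner_zero_right]
  set D := ∫ y, Real.exp (tiltExponent t m x y) ∂p with hD
  have hD0 : D ≠ 0 := (integral_exp_pos (hI hwc)).ne'
  have hDr : D = 1 + ∫ y, r y ∂p := by
    rw [hD]
    simp only [hw]
    rw [integral_add (hI (by fun_prop)) (hI hrc), integral_add (hI (by fun_prop)) (hI (by fun_prop)),
      integral_const_mul, hlin]
    simp
  have hN : ∫ y, Real.exp (tiltExponent t m x y) • (y - m) ∂p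
      = t • T + ∫ y, r y • (y - m) ∂p := by
    simp only [hw, add_smul, one_smul, mul_smul]
    rw [integral_add (hI (by fun_prop)) (hI (by fun_prop)),
      integral_add (hI (by fun_prop)) (hI (by fun_prop)), integral_smul, integral_sub_meanVec hp,
      zero_add, hT, toEuclideanLin_covMatrix hp]
  have hN' : ∫ y, Real.exp (tiltExponent t m x y) • y ∂p
      = D • m + t • T + ∫ y, r y • (y - m) ∂p := by
    rw [add_assoc, ← hN]
    simp only [smul_sub]
    rw [integral_sub (hI (by fun_prop)) (hI (by fun_prop)), integral_smul_const]
    abel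
  have hden : mtDen p t x = D⁻¹ • ∫ y, Real.exp (tiltExponent t m x y) • y ∂p := by
    simp only [mtDen, Dt, Nt, Wt_eq_mul_exp_tiltExponent ht m, mul_smul]
    rw [integral_const_mul, integral_smul, ← hD, smul_smul, mul_inv, mul_right_comm,
      inv_mul_cancel₀ (Real.exp_pos _).ne', one_mul]
  rw [hden, hN']
  have hr1 : ∫ y, r y ∂p = D - 1 := by rw [hDr]; ring
  rw [hr1, eq_inv_smul_iff₀ hD0, smul_sub, smul_inv_smul₀ hD0]
  module

theorem exists_norm_mtDen_sub_le (hR : 0 ≤ R) (hp : ∀ᵐ y ∂p, ‖y‖ ≤ R) {δ : ℝ} (hδ : δ < 1) :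
    ∃ C : ℝ, ∀ x : EuclideanSpace ℝ (Fin d), ‖x‖ ≤ R → ∀ t : ℝ, |t| ≤ δ →
      ‖mtDen p t x - (meanVec p + t • Matrix.toEuclideanLin (covMatrix p) x)‖ ≤ C * t ^ 2 := by
  obtain ⟨K, c, hc, hK⟩ := exists_exp_tiltExponent_bounds (d := d) hR hδ
  set T := (Matrix.toEuclideanLin (covMatrix p)).toContinuousLinearMap
  refine ⟨c⁻¹ * (K * (2 * R) + K * (‖T‖ * R)), fun x hx t ht => ?_⟩
  have ht1 : |t| ≤ 1 := by linarith
  have hmR := norm_meanVec_le hp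
  have hTx : ‖Matrix.toEuclideanLin (covMatrix p) x‖ ≤ ‖T‖ * R := (T.le_opNorm x).trans (by gcongr)
  rw [mtDen_sub_eq hp (by linarith [le_abs_self t]) x _ fun _ => rfl, norm_smul]
  set r := fun y => Real.exp (tiltExponent t (meanVec p) x y) - 1 - t * inner ℝ x (y - meanVec p)
  have hr : ∀ᵐ y ∂p, ‖r y‖ ≤ K * t ^ 2 := by
    filter_upwards [hp] with y hy using (hK t ht _ x y hmR hx hy).2
  have hD : c ≤ ∫ y, Real.exp (tiltExponent t (meanVec p) x y) ∂p := by
    have := integral_mono_ae (μ := p) (integrable_const c)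
      (integrable_of_continuous_of_ae_norm_le hp
        (Real.continuous_exp.comp (continuous_tiltExponent t (meanVec p) x)))
      (by filter_upwards [hp] with y hy using (hK t ht _ x y hmR hx hy).1)
    simpa using this
  have hKt : 0 ≤ K * t ^ 2 := by
    obtain ⟨y, hy⟩ := hr.exists
    exact (norm_nonneg _).trans hy
  have h1 : ‖∫ y, r y ∂p‖ ≤ K * t ^ 2 := by simpa using norm_integral_le_of_norm_le_const hr
  have h2 : ‖∫ y, r y • (y - meanVec p) ∂p‖ ≤ K * t ^ 2 * (2 * R) := by
    have : ∀ᵐ y ∂p, ‖r y • (y - meanVec p)‖ ≤ K * t ^ 2 * (2 * R) := by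
      filter_upwards [hr, hp] with y hry hy
      rw [norm_smul]
      gcongr
      exact (norm_sub_le _ _).trans (by linarith)
    simpa using norm_integral_le_of_norm_le_const this
  have h3 : ‖(t * ∫ y, r y ∂p) • Matrix.toEuclideanLin (covMatrix p) x‖
      ≤ K * t ^ 2 * (‖T‖ * R) := by
    rw [norm_smul, norm_mul]
    refine mul_le_mul ?_ hTx (norm_nonneg _) hKt
    calc ‖t‖ * ‖∫ y, r y ∂p‖ ≤ 1 * (K * t ^ 2) := by gcongr; exact ht1
      _ = _ := one_mul _
  rw [norm_inv, Real.norm_of_nonneg (hc.le.trans hD)]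
  calc _ ≤ c⁻¹ * (K * t ^ 2 * (2 * R) + K * t ^ 2 * (‖T‖ * R)) := by
        gcongr
        exact (norm_sub_le _ _).trans (add_le_add h2 h3)
    _ = _ := by ring

end Moments

theorem Matrix.PosSemidef.exists_norm_mtG_sub_le {d : ℕ} {S : Matrix (Fin d) (Fin d) ℝ}
    (hS : S.PosSemidef) (m : EuclideanSpace ℝ (Fin d)) {R δ : ℝ} (hδ : δ < 1) :
    ∃ C : ℝ, ∀ x : EuclideanSpace ℝ (Fin d), ‖x‖ ≤ R → ∀ t : ℝ, |t| ≤ δ →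
      ‖mtG m S t x - (m + t • Matrix.toEuclideanLin S x)‖ ≤ C * t ^ 2 := by
  set T := (Matrix.toEuclideanLin S).toContinuousLinearMap with hT
  have hTapp : ∀ v, Matrix.toEuclideanLin S v = T v := fun _ => rfl
  refine ⟨‖T‖ * ((1 - δ) ^ 2)⁻¹ * (3 * R + ‖m‖ + ‖T‖ * R), fun x hx t ht => ?_⟩
  obtain ⟨ht1, ht2⟩ := abs_le.1 ht
  have hs : 0 < 1 - t := by linarith
  have hd : 0 < (1 - δ) ^ 2 := pow_pos (by linarith) 2
  have hR : 0 ≤ R := (norm_nonneg _).trans hx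
  set M := t ^ 2 • S + (1 - t) ^ 2 • (1 : Matrix (Fin d) (Fin d) ℝ) with hM
  have hMpos : M.PosDef :=
    (Matrix.PosDef.one.smul (pow_pos hs 2)).posSemidef_add (hS.smul (sq_nonneg t))
  have hMapp : ∀ v, Matrix.toEuclideanLin M v = t ^ 2 • T v + (1 - t) ^ 2 • v := fun v => by
    simp [hM, hTapp]
  have hcoer : ∀ v, (1 - δ) ^ 2 * ‖v‖ ≤ ‖Matrix.toEuclideanLin M v‖ := fun v => by
    have hTv : 0 ≤ inner ℝ (T v) v :=
      (Matrix.isPositive_toEuclideanLin_iff.2 hS).2 v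
    have h1 : (1 - δ) ^ 2 * ‖v‖ ^ 2 ≤ inner ℝ (Matrix.toEuclideanLin M v) v := by
      rw [hMapp, inner_add_left, real_inner_smul_left, real_inner_smul_left,
        real_inner_self_eq_norm_sq]
      have : (1 - δ) ^ 2 ≤ (1 - t) ^ 2 := pow_le_pow_left₀ (by linarith) (by linarith) 2
      nlinarith [mul_nonneg (sq_nonneg t) hTv, sq_nonneg ‖v‖]
    have h2 := h1.trans (real_inner_le_norm _ _)
    rcases (norm_nonneg v).eq_or_lt with h0 | h0
    · simp [← h0]
    · exact le_of_mul_le_mul_right (by linarith) h0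
  have hMinv : ∀ w, Matrix.toEuclideanLin M (Matrix.toEuclideanLin M⁻¹ w) = w := fun w => by
    rw [← LinearMap.comp_apply, ← Matrix.toLpLin_mul_same,
      Matrix.mul_nonsing_inv _ ((Matrix.isUnit_iff_isUnit_det _).1 hMpos.isUnit)]
    simp
  have hMinv' : ∀ w, Matrix.toEuclideanLin M⁻¹ (Matrix.toEuclideanLin M w) = w := fun w => by
    rw [← LinearMap.comp_apply, ← Matrix.toLpLin_mul_same,
      Matrix.nonsing_inv_mul _ ((Matrix.isUnit_iff_isUnit_det _).1 hMpos.isUnit)]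
    simp
  set w := (2 - t) • x - m - t • T x with hw
  have hxw : x - t • m = Matrix.toEuclideanLin M x + t • w := by
    rw [hMapp, hw]; module
  have e : mtG m S t x - (m + t • Matrix.toEuclideanLin S x)
      = t ^ 2 • T (Matrix.toEuclideanLin M⁻¹ w) := by
    rw [mtG, ← hM, Matrix.toLpLin_mul_same, LinearMap.comp_apply, hxw, map_add, hMinv', map_smul,
      hTapp, hTapp, map_add, map_smul]
    module
  have hwn : ‖w‖ ≤ 3 * R + ‖m‖ + ‖T‖ * R := by
    have h1 : ‖(2 - t) • x‖ ≤ 3 * R := by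
      rw [norm_smul, Real.norm_of_nonneg (by linarith)]
      exact mul_le_mul (by linarith) hx (norm_nonneg _) (by norm_num)
    have h2 : ‖t • T x‖ ≤ ‖T‖ * R := by
      rw [norm_smul]
      calc ‖t‖ * ‖T x‖ ≤ 1 * (‖T‖ * R) := by
            gcongr
            · exact ht.trans hδ.le
            · exact (T.le_opNorm x).trans (by gcongr)
        _ = _ := one_mul _
    exact (norm_sub_le _ _).trans (add_le_add ((norm_sub_le _ _).trans (by gcongr)) h2)
  have hinv : ‖Matrix.toEuclideanLin M⁻¹ w‖ ≤ ((1 - δ) ^ 2)⁻¹ * ‖w‖ := by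
    have := hcoer (Matrix.toEuclideanLin M⁻¹ w)
    rw [hMinv] at this
    rwa [le_inv_mul_iff₀ hd]
  rw [e, norm_smul, Real.norm_of_nonneg (sq_nonneg t)]
  calc t ^ 2 * ‖T (Matrix.toEuclideanLin M⁻¹ w)‖
      ≤ t ^ 2 * (‖T‖ * (((1 - δ) ^ 2)⁻¹ * (3 * R + ‖m‖ + ‖T‖ * R))) := by
        gcongr
        refine (T.le_opNorm _).trans ?_
        gcongr
        exact hinv.trans (by gcongr)
    _ = _ := by ring

/-- for `p` supported in `B_R(0)` and every `δ ∈ (0,1)` there is a bounded function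
`H̃ : B̄_R(0) × [−δ, δ] → ℝ^d` with `m_t(x) = m_t^G(x) + t² H̃(x, t)` for all `x ∈ B̄_R(0)` and
`|t| ≤ δ`. -/
theorem gaussian_plus_excess_t {d : ℕ} (R : ℝ) (hR : 0 < R)
    (p : Measure (EuclideanSpace ℝ (Fin d))) [IsProbabilityMeasure p]
    (hsupp : p (Metric.ball (0 : EuclideanSpace ℝ (Fin d)) R)ᶜ = 0)
    (δ : ℝ) (hδ : δ ∈ Set.Ioo (0 : ℝ) 1) :
    ∃ Htil : EuclideanSpace ℝ (Fin d) → ℝ → EuclideanSpace ℝ (Fin d),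
      (∃ C : ℝ, ∀ x ∈ Metric.closedBall (0 : EuclideanSpace ℝ (Fin d)) R,
        ∀ t ∈ Set.Icc (-δ) δ, ‖Htil x t‖ ≤ C) ∧
      ∀ x ∈ Metric.closedBall (0 : EuclideanSpace ℝ (Fin d)) R, ∀ t : ℝ, |t| ≤ δ →
        mtDen p t x = mtG (meanVec p) (covMatrix p) t x + t ^ 2 • Htil x t := by
  obtain ⟨hδ0, hδ1⟩ := hδ
  have hp : ∀ᵐ y ∂p, ‖y‖ ≤ R := by
    filter_upwards [mem_ae_iff.2 hsupp] with y hy using (mem_ball_zero_iff.1 hy).le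
  obtain ⟨C₁, hC₁⟩ := exists_norm_mtDen_sub_le hR.le hp hδ1
  obtain ⟨C₂, hC₂⟩ := (posSemidef_covMatrix hp).exists_norm_mtG_sub_le (meanVec p) (R := R) hδ1
  have key : ∀ x ∈ Metric.closedBall (0 : EuclideanSpace ℝ (Fin d)) R, ∀ t : ℝ, |t| ≤ δ →
      ‖mtDen p t x - mtG (meanVec p) (covMatrix p) t x‖ ≤ (C₁ + C₂) * t ^ 2 := by
    intro x hx t ht
    have hx' := mem_closedBall_zero_iff.1 hx
    rw [← sub_sub_sub_cancel_right _ _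
      (meanVec p + t • Matrix.toEuclideanLin (covMatrix p) x), add_mul]
    exact (norm_sub_le _ _).trans (add_le_add (hC₁ x hx' t ht) (hC₂ x hx' t ht))
  refine ⟨fun x t => (t ^ 2)⁻¹ • (mtDen p t x - mtG (meanVec p) (covMatrix p) t x),
    ⟨max (C₁ + C₂) 0, fun x hx t ht => ?_⟩, fun x hx t ht => ?_⟩
  · rw [norm_smul, norm_inv, Real.norm_of_nonneg (sq_nonneg t)]
    rcases eq_or_ne t 0 with rfl | h0
    · simp
    · rw [inv_mul_le_iff₀ (by positivity), mul_comm]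
      exact (key x hx t (abs_le.2 ht)).trans (by gcongr; exact le_max_left _ _)
  · rcases eq_or_ne t 0 with rfl | h0
    · have h := key x hx 0 ht
      simp only [ne_eq, OfNat.ofNat_ne_zero, not_false_eq_true, zero_pow, mul_zero,
        norm_le_zero_iff, sub_eq_zero] at h
      simp [h]
    · rw [smul_inv_smul₀ (by positivity)]
      abel

end
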